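/- Write n = n₁ + n₂ with n₁, n₂ ≥ 0. Let γ be a compact face of Γ and J ⊆ I ⊆ {1,…,n} be such that γ + ℝ_{≥0}^I is a face of Γ (hence so is γ + ℝ_{≥0}^J). If σ_{γ,I} is contained in ℝ_{≥0}^{n₁} × ℝ_{>0}^{n₂}, then σ_{γ,J} is also contained in ℝ_{≥0}^{n₁} × ℝ_{>0}^{n₂}; moreover σ̄(γ + ℝ_{≥0}^I) is a face of the closed convex cone σ̄(γ + ℝ_{≥0}^J). -/

import Mathlib

/-!
For `a ≥ 0` the face `faceAt S a` is the set of minimisers of `⟨a, ·⟩` on the polyhedron, and it is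
nonempty because the minimum over the finite set `S` is attained. Two facts give the theorem.

* If `faceAt S a = γ + ℝ_{≥0}^I` with `γ` bounded and nonempty, then `a i = 0` exactly for `i ∈ I`
  (`coord_eq_zero`, `coord_pos`). So `hIm` says `I ⊆ {i | i < n₁}`; since `J ⊆ I`, every
  normal vector of `γ + ℝ_{≥0}^J` is positive in the coordinates `i ≥ n₁`.
* The closure of `sigmaCone S ε` is `{a ≥ 0 | ε ⊆ faceAt S a}` (`sigmaConeCl_eq`): these conditions
  are closed, and conversely, if `a₀ ≥ 0` has `faceAt S a₀ = ε`, then `a + t • a₀` lies in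
  `sigmaCone S ε` for `t > 0` and tends to `a`. Hence the closed cone of `γ + ℝ_{≥0}^I` is cut out
  of that of `γ + ℝ_{≥0}^J` by the equations `a i = 0`, `i ∈ I`, that is, by the vanishing of the
  linear form `a ↦ ∑_{i ∈ I} a i`.
-/

open Finset Set Pointwise

noncomputable section

/-- Standard inner product on `ℝ^n`. -/
def dotR {n : ℕ} (a b : Fin n → ℝ) : ℝ := ∑ i, a i * b i

/-- The nonnegative orthant `ℝ_{≥0}^n`. -/
def nonnegOrthant (n : ℕ) : Set (Fin n → ℝ) := {x | ∀ i, 0 ≤ x i}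

/-- Coercion of an integer lattice point to `ℝ^n`. -/
def natCastVec {n : ℕ} (α : Fin n → ℕ) : Fin n → ℝ := fun i => (α i : ℝ)

/-- The Newton polyhedron of a finite set `S ⊆ ℕ^n`: the convex hull of `S + ℝ_{≥0}^n`. -/
def newtonPolyhedron {n : ℕ} (S : Finset (Fin n → ℕ)) : Set (Fin n → ℝ) :=
  convexHull ℝ {x | ∃ α ∈ S, ∃ v ∈ nonnegOrthant n, x = natCastVec α + v}

/-- `l_Γ(a) = inf {⟨a,b⟩ : b ∈ Γ}`. -/
def lGamma {n : ℕ} (S : Finset (Fin n → ℕ)) (a : Fin n → ℝ) : ℝ :=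
  sInf ((fun b => dotR a b) '' newtonPolyhedron S)

/-- `γ_a = {b ∈ Γ : ⟨a,b⟩ = l_Γ(a)}`. -/
def faceAt {n : ℕ} (S : Finset (Fin n → ℕ)) (a : Fin n → ℝ) : Set (Fin n → ℝ) :=
  {b ∈ newtonPolyhedron S | dotR a b = lGamma S a}

/-- A face of `Γ` is a set of the form `γ_a` with `a ∈ ℝ_{≥0}^n`. -/
def IsFaceOf {n : ℕ} (S : Finset (Fin n → ℕ)) (γ : Set (Fin n → ℝ)) : Prop :=
  ∃ a ∈ nonnegOrthant n, γ = faceAt S a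

/-- A proper face is a face different from `Γ`. -/
def IsProperFaceOf {n : ℕ} (S : Finset (Fin n → ℕ)) (γ : Set (Fin n → ℝ)) : Prop :=
  IsFaceOf S γ ∧ γ ≠ newtonPolyhedron S

/-- `σ(γ) = {a ∈ ℝ_{≥0}^n : γ_a = γ}`. -/
def sigmaCone {n : ℕ} (S : Finset (Fin n → ℕ)) (γ : Set (Fin n → ℝ)) : Set (Fin n → ℝ) :=
  {a ∈ nonnegOrthant n | faceAt S a = γ}

/-- `σ̄(γ)`, the closure of `σ(γ)` in `ℝ^n`. -/
def sigmaConeCl {n : ℕ} (S : Finset (Fin n → ℕ)) (γ : Set (Fin n → ℝ)) : Set (Fin n → ℝ) :=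
  closure (sigmaCone S γ)

/-- `F` is a face of the closed convex cone `C`: `F = {x ∈ C | λ x = 0}` for a linear form
`λ` nonnegative on `C`. -/
def IsConeFaceOf {n : ℕ} (C F : Set (Fin n → ℝ)) : Prop :=
  ∃ lam : (Fin n → ℝ) →ₗ[ℝ] ℝ, (∀ x ∈ C, 0 ≤ lam x) ∧ F = {x ∈ C | lam x = 0}

/-- The dimension of a subset of `ℝ^n`: the dimension of its affine span. -/
def dimSet {n : ℕ} (s : Set (Fin n → ℝ)) : ℕ :=
  Module.finrank ℝ (affineSpan ℝ s).direction

/-- `ℝ_{≥0}^I = {x ∈ ℝ_{≥0}^n : x_i = 0 for i ∉ I}`. -/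
def orthantOn (n : ℕ) (I : Set (Fin n)) : Set (Fin n → ℝ) :=
  {x | (∀ i, 0 ≤ x i) ∧ ∀ i ∉ I, x i = 0}

/-- `ℝ_{≥0}^{n₁} × ℝ_{>0}^{n₂} = {a ∈ ℝ_{≥0}^n : a_i > 0 for i > n₁}`. -/
def mixedOrthant (n n₁ : ℕ) : Set (Fin n → ℝ) :=
  {x | (∀ i, 0 ≤ x i) ∧ ∀ i : Fin n, n₁ ≤ (i : ℕ) → 0 < x i}

lemma dotR_add_right {n : ℕ} (a b c : Fin n → ℝ) : dotR a (b + c) = dotR a b + dotR a c := by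
  simp [dotR, mul_add, Finset.sum_add_distrib]

lemma dotR_add_left {n : ℕ} (a b c : Fin n → ℝ) : dotR (a + b) c = dotR a c + dotR b c := by
  simp [dotR, add_mul, Finset.sum_add_distrib]

lemma dotR_smul_left {n : ℕ} (t : ℝ) (a c : Fin n → ℝ) : dotR (t • a) c = t * dotR a c := by
  simp [dotR, Finset.mul_sum, mul_assoc]

lemma dotR_smul_right {n : ℕ} (t : ℝ) (a c : Fin n → ℝ) : dotR a (t • c) = t * dotR a c := by
  simp only [dotR, Finset.mul_sum, Pi.smul_apply, smul_eq_mul]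
  exact Finset.sum_congr rfl fun i _ => by ring

lemma dotR_single {n : ℕ} (a : Fin n → ℝ) (i : Fin n) (t : ℝ) :
    dotR a (Pi.single i t) = a i * t := by
  simp [dotR, Pi.single_apply]

lemma dotR_nonneg {n : ℕ} {a b : Fin n → ℝ} (ha : a ∈ nonnegOrthant n)
    (hb : b ∈ nonnegOrthant n) : 0 ≤ dotR a b :=
  Finset.sum_nonneg fun i _ => mul_nonneg (ha i) (hb i)

lemma convex_le_dotR {n : ℕ} (a : Fin n → ℝ) (m : ℝ) : Convex ℝ {x | m ≤ dotR a x} := by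
  intro x hx y hy s t hs ht hst
  simp only [Set.mem_ofPred_eq, dotR_add_right, dotR_smul_right] at *
  calc m = s * m + t * m := by rw [← add_mul, hst, one_mul]
    _ ≤ _ := add_le_add (mul_le_mul_of_nonneg_left hx hs) (mul_le_mul_of_nonneg_left hy ht)

lemma le_dotR_of_mem {n : ℕ} {S : Finset (Fin n → ℕ)} {a : Fin n → ℝ} (ha : a ∈ nonnegOrthant n)
    {m : ℝ} (hm : ∀ α ∈ S, m ≤ dotR a (natCastVec α)) {x : Fin n → ℝ}
    (hx : x ∈ newtonPolyhedron S) : m ≤ dotR a x := by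
  refine convexHull_min ?_ (convex_le_dotR a m) hx
  rintro _ ⟨α, hα, v, hv, rfl⟩
  simp only [Set.mem_ofPred_eq, dotR_add_right]
  linarith [hm α hα, dotR_nonneg ha hv]

lemma natCastVec_mem {n : ℕ} {S : Finset (Fin n → ℕ)} {α : Fin n → ℕ} (hα : α ∈ S) :
    natCastVec α ∈ newtonPolyhedron S :=
  subset_convexHull ℝ _ ⟨α, hα, 0, fun _ => le_rfl, (add_zero _).symm⟩

lemma add_mem_newton {n : ℕ} {S : Finset (Fin n → ℕ)} {x v : Fin n → ℝ}
    (hx : x ∈ newtonPolyhedron S) (hv : v ∈ nonnegOrthant n) : x + v ∈ newtonPolyhedron S := by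
  have hc : Convex ℝ ((fun z => z + v) ⁻¹' newtonPolyhedron S) :=
    (convex_convexHull ℝ _).translate_preimage_left v
  refine convexHull_min (t := (fun z => z + v) ⁻¹' newtonPolyhedron S) ?_ hc hx
  rintro _ ⟨α, hα, w, hw, rfl⟩
  exact subset_convexHull ℝ _ ⟨α, hα, w + v, fun i => add_nonneg (hw i) (hv i), add_assoc _ _ _⟩

/-- The infimum defining `lGamma` is bounded below by `0` for `a ≥ 0`, so `faceAt S a` is the set
of minimisers. -/
lemma mem_faceAt {n : ℕ} {S : Finset (Fin n → ℕ)} {a : Fin n → ℝ} (ha : a ∈ nonnegOrthant n)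
    {b : Fin n → ℝ} :
    b ∈ faceAt S a ↔ b ∈ newtonPolyhedron S ∧ ∀ c ∈ newtonPolyhedron S, dotR a b ≤ dotR a c := by
  refine and_congr_right fun hb => ⟨fun h c hc => ?_, fun h => ?_⟩
  · rw [h]
    refine csInf_le ⟨0, ?_⟩ ⟨c, hc, rfl⟩
    rintro _ ⟨x, hx, rfl⟩
    exact le_dotR_of_mem ha (fun α _ => dotR_nonneg ha fun i => Nat.cast_nonneg _) hx
  · have : IsLeast ((fun b => dotR a b) '' newtonPolyhedron S) (dotR a b) :=
      ⟨⟨b, hb, rfl⟩, by rintro _ ⟨c, hc, rfl⟩; exact h c hc⟩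
    exact this.csInf_eq.symm

lemma faceAt_nonempty {n : ℕ} {S : Finset (Fin n → ℕ)} (hS : S.Nonempty) {a : Fin n → ℝ}
    (ha : a ∈ nonnegOrthant n) : (faceAt S a).Nonempty := by
  obtain ⟨α, hα, hmin⟩ := S.exists_min_image (fun α => dotR a (natCastVec α)) hS
  exact ⟨natCastVec α, (mem_faceAt ha).2 ⟨natCastVec_mem hα, fun c hc => le_dotR_of_mem ha hmin hc⟩⟩

lemma sigmaConeCl_eq {n : ℕ} {S : Finset (Fin n → ℕ)} (hS : S.Nonempty) {ε : Set (Fin n → ℝ)}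
    (hε : IsFaceOf S ε) : sigmaConeCl S ε = {a ∈ nonnegOrthant n | ε ⊆ faceAt S a} := by
  obtain ⟨a₀, ha₀, rfl⟩ := hε
  obtain ⟨b₀, hb₀⟩ := faceAt_nonempty hS ha₀
  apply Set.Subset.antisymm
  · have hcont : ∀ b : Fin n → ℝ, Continuous fun a : Fin n → ℝ => dotR a b := fun b => by
      unfold dotR; fun_prop
    have hclosed : IsClosed {a : Fin n → ℝ | (∀ i, 0 ≤ a i) ∧
        ∀ b ∈ faceAt S a₀, ∀ c ∈ newtonPolyhedron S, dotR a b ≤ dotR a c} := by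
      simp only [Set.ofPred_and, Set.ofPred_forall]
      refine IsClosed.inter ?_ ?_
      · exact isClosed_iInter fun i => isClosed_le continuous_const (continuous_apply i)
      · exact isClosed_iInter fun b => isClosed_iInter fun _ => isClosed_iInter fun c =>
          isClosed_iInter fun _ => isClosed_le (hcont b) (hcont c)
    intro a ha
    have := closure_minimal ?_ hclosed ha
    · exact ⟨this.1, fun b hb => (mem_faceAt this.1).2 ⟨hb.1, this.2 b hb⟩⟩
    · rintro a ⟨ha, h⟩
      refine ⟨ha, fun b hb => ?_⟩
      rw [← h] at hb
      exact ((mem_faceAt ha).1 hb).2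
  · rintro a ⟨ha, hsub⟩
    have hmem : ∀ t : ℝ, 0 < t → a + t • a₀ ∈ sigmaCone S (faceAt S a₀) := by
      intro t ht
      have hpos : a + t • a₀ ∈ nonnegOrthant n :=
        fun i => add_nonneg (ha i) (mul_nonneg ht.le (ha₀ i))
      refine ⟨hpos, Set.ext fun c => ?_⟩
      rw [mem_faceAt hpos]
      simp only [dotR_add_left, dotR_smul_left]
      constructor
      · rintro ⟨hc, hmin⟩
        refine (mem_faceAt ha₀).2 ⟨hc, fun d hd => ?_⟩
        -- `b₀` minimises both forms, so a minimiser of their sum minimises each of them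
        have h1 := hmin b₀ hb₀.1
        have h2 := ((mem_faceAt ha).1 (hsub hb₀)).2 c hc
        have h3 : dotR a₀ c ≤ dotR a₀ b₀ := le_of_mul_le_mul_left (by linarith) ht
        exact h3.trans (((mem_faceAt ha₀).1 hb₀).2 d hd)
      · intro hc
        refine ⟨hc.1, fun d hd => add_le_add (((mem_faceAt ha).1 (hsub hc)).2 d hd) ?_⟩
        exact mul_le_mul_of_nonneg_left (((mem_faceAt ha₀).1 hc).2 d hd) ht.le
    have hlim : Filter.Tendsto (fun t : ℝ => a + t • a₀) (nhdsWithin 0 (Ioi 0)) (nhds a) := by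
      have : Continuous fun t : ℝ => a + t • a₀ := by fun_prop
      have h := this.tendsto 0
      simp only [zero_smul, add_zero] at h
      exact h.mono_left nhdsWithin_le_nhds
    exact mem_closure_of_tendsto hlim
      (Filter.eventually_of_mem self_mem_nhdsWithin fun t ht => hmem t ht)

lemma zero_mem_orthantOn (n : ℕ) (I : Set (Fin n)) : (0 : Fin n → ℝ) ∈ orthantOn n I :=
  ⟨fun _ => le_rfl, fun _ _ => rfl⟩

lemma orthantOn_mono {n : ℕ} {I J : Set (Fin n)} (h : J ⊆ I) : orthantOn n J ⊆ orthantOn n I :=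
  fun _ hx => ⟨hx.1, fun i hi => hx.2 i fun hj => hi (h hj)⟩

/-- `⟨a, ·⟩` takes the same value at `b` and `b + e_i` for `b ∈ γ`, `i ∈ I`. -/
lemma coord_eq_zero {n : ℕ} {S : Finset (Fin n → ℕ)} {γ : Set (Fin n → ℝ)} (hne : γ.Nonempty)
    {I : Set (Fin n)} {a : Fin n → ℝ} (h : γ + orthantOn n I ⊆ faceAt S a)
    {i : Fin n} (hi : i ∈ I) : a i = 0 := by
  obtain ⟨b, hb⟩ := hne
  have h0 := (h (add_mem_add hb (zero_mem_orthantOn n I))).2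
  have hs : Pi.single i (1 : ℝ) ∈ orthantOn n I :=
    ⟨fun j => by by_cases hj : j = i <;> simp [hj],
      fun j hj => Pi.single_eq_of_ne (by rintro rfl; exact hj hi) _⟩
  have h1 := (h (add_mem_add hb hs)).2
  rw [add_zero] at h0
  rw [dotR_add_right, dotR_single, h0] at h1
  linarith

/-- If `a i = 0` then the face of `a` contains the rays `b + ℝ_{≥0} e_i`; for `i ∉ J` these would
make the `i`-th coordinate unbounded on `γ`. -/
lemma coord_pos {n : ℕ} {S : Finset (Fin n → ℕ)} {γ : Set (Fin n → ℝ)} (hne : γ.Nonempty)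
    (hb : Bornology.IsBounded γ) {J : Set (Fin n)} {a : Fin n → ℝ} (ha : a ∈ nonnegOrthant n)
    (h : faceAt S a = γ + orthantOn n J) {i : Fin n} (hi : i ∉ J) : 0 < a i := by
  refine (ha i).lt_of_ne' fun hai => ?_
  obtain ⟨b, hbγ⟩ := hne
  obtain ⟨C, hC⟩ := hb.exists_norm_le
  have hbf : b ∈ faceAt S a := by
    rw [h]; simpa using add_mem_add hbγ (zero_mem_orthantOn n J)
  -- `t` is chosen so that the `i`-th coordinate of `b + t e_i` exceeds the bound `C` on `γ`
  set t : ℝ := |C| + |b i| + 1 with ht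
  have ht0 : 0 ≤ t := by positivity
  have hs : Pi.single i t ∈ nonnegOrthant n := fun j => by
    by_cases hj : j = i <;> simp [hj, ht0]
  have hmem : b + Pi.single i t ∈ faceAt S a :=
    ⟨add_mem_newton hbf.1 hs, by rw [dotR_add_right, dotR_single, hai, zero_mul, add_zero, hbf.2]⟩
  rw [h] at hmem
  obtain ⟨g, hg, w, hw, hgw⟩ := hmem
  have e := congrFun hgw i
  simp only [Pi.add_apply, hw.2 i hi, Pi.single_eq_same, add_zero] at e
  have h1 := (norm_le_pi_norm g i).trans (hC g hg)
  rw [Real.norm_eq_abs] at h1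
  linarith [le_abs_self (g i), le_abs_self C, neg_abs_le (b i)]

theorem sigmaCone_leant_mono {n n₁ n₂ : ℕ} (hn : 1 ≤ n) (hn12 : n = n₁ + n₂)
    (S : Finset (Fin n → ℕ)) (hS : S.Nonempty) (hS0 : (0 : Fin n → ℕ) ∉ S)
    (γ : Set (Fin n → ℝ)) (hγ : IsFaceOf S γ) (hγc : Bornology.IsBounded γ)
    (I J : Set (Fin n)) (hJI : J ⊆ I)
    (hI : IsFaceOf S (γ + orthantOn n I)) (hJ : IsFaceOf S (γ + orthantOn n J))
    (hIm : sigmaCone S (γ + orthantOn n I) ⊆ mixedOrthant n n₁) :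
    sigmaCone S (γ + orthantOn n J) ⊆ mixedOrthant n n₁ ∧
    IsConeFaceOf (sigmaConeCl S (γ + orthantOn n J)) (sigmaConeCl S (γ + orthantOn n I)) := by
  classical
  have hne : γ.Nonempty := by
    obtain ⟨a, ha, rfl⟩ := hγ
    exact faceAt_nonempty hS ha
  refine ⟨?_, ?_⟩
  · rintro a ⟨ha, h⟩
    obtain ⟨a', ha', h'⟩ := hI
    refine ⟨ha, fun i hi => coord_pos hne hγc ha h fun hiJ => ?_⟩
    have hp := (hIm ⟨ha', h'.symm⟩).2 i hi
    exact hp.ne' (coord_eq_zero hne h'.subset (hJI hiJ))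
  · rw [sigmaConeCl_eq hS hI, sigmaConeCl_eq hS hJ]
    have hlam : ∀ x, (∑ i with i ∈ I, (LinearMap.proj i : (Fin n → ℝ) →ₗ[ℝ] ℝ)) x
        = ∑ i with i ∈ I, x i := fun x => by simp
    refine ⟨∑ i with i ∈ I, LinearMap.proj i, fun x hx => ?_, Set.ext fun a => ⟨?_, ?_⟩⟩
    · rw [hlam]
      exact Finset.sum_nonneg fun i _ => hx.1 i
    · rintro ⟨ha, h⟩
      refine ⟨⟨ha, (add_subset_add_left (orthantOn_mono hJI)).trans h⟩, ?_⟩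
      rw [hlam]
      exact Finset.sum_eq_zero fun i hi => coord_eq_zero hne h (Finset.mem_filter.1 hi).2
    · rintro ⟨⟨ha, h⟩, h0⟩
      rw [hlam, Finset.sum_eq_zero_iff_of_nonneg fun i _ => ha i] at h0
      refine ⟨ha, ?_⟩
      rintro _ ⟨g, hg, w, hw, rfl⟩
      have hgf : g ∈ faceAt S a := by
        simpa using h (add_mem_add hg (zero_mem_orthantOn n J))
      have haw : dotR a w = 0 := Finset.sum_eq_zero fun i _ => by
        by_cases hi : i ∈ I
        · rw [h0 i (by simp [hi]), zero_mul]
        · rw [hw.2 i hi, mul_zero]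
      obtain ⟨a', -, h'⟩ := hI
      have hΓ : g + w ∈ faceAt S a' := h' ▸ add_mem_add hg hw
      exact ⟨hΓ.1, by rw [dotR_add_right, haw, add_zero, hgf.2]⟩
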